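/- (Amitsur–Levitzki theorem) For any 2n complex n×n matrices X_1, …, X_{2n}, the alternating sum Σ_{σ ∈ S_{2n}} sgn(σ) · X_{σ(1)} X_{σ(2)} ⋯ X_{σ(2n)} equals the zero matrix, where the product is the ordered matrix product. -/

import Mathlib

open Matrix

/-!
Rosset's argument. Over the exterior algebra with generators `e₁, …, eₘ`, the `m`-th power of
`Y = ∑ i, eᵢ ⊗ Xᵢ` is `(e₁ ∧ ⋯ ∧ eₘ) ⊗ S`, where `S` is the alternating sum of the products of the
`Xᵢ`, so for `m ≥ 2 n` it suffices that `Y ^ (2 * n) = 0`. The entries of `Y ^ 2` lie in the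
commutative even part, and `tr (Y ^ (2 * k)) = -tr (Y ^ (2 * k))` for `k ≥ 1` because odd elements
anticommute. In the absence of additive torsion these traces vanish, and Newton's identities give
`(Y ^ 2) ^ n = 0`. Over an arbitrary commutative ring, `S` is multilinear in the `Xᵢ`, so it is
enough to treat matrix units, which are defined over `ℤ`.
-/

section Newton

open Polynomial

variable {n R : Type*} [Fintype n] [DecidableEq n] [CommRing R]

theorem derivative_det (A : Matrix n n R[X]) :
    derivative A.det = (A.adjugate * A.map derivative).trace := by
  have hdiag (i : n) : (A.adjugate * A.map derivative) i i =
      (A.updateCol i fun j => derivative (A j i)).det := by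
    rw [← cramer_apply, cramer_eq_adjugate_mulVec]
    rfl
  have hterm (σ : Equiv.Perm n) (i : n) :
      (∏ j ∈ Finset.univ.erase i, A (σ j) j) * derivative (A (σ i) i) =
        ∏ j, A.updateCol i (fun k => derivative (A k i)) (σ j) j := by
    rw [← Finset.prod_erase_mul _ _ (Finset.mem_univ i), updateCol_self]
    congr 1
    exact Finset.prod_congr rfl fun j hj => (updateCol_ne (Finset.ne_of_mem_erase hj)).symm
  simp only [trace, diag_apply, hdiag, det_apply, map_sum, derivative_smul, Units.smul_def,
    derivative_prod_finset, hterm, Finset.smul_sum]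
  exact Finset.sum_comm

theorem charmatrix_map_derivative (M : Matrix n n R) : M.charmatrix.map derivative = 1 := by
  ext1 i j
  by_cases h : i = j <;> simp [one_apply, h]

theorem trace_adjugate_charmatrix (M : Matrix n n R) :
    M.charmatrix.adjugate.trace = derivative M.charpoly := by
  rw [charpoly, derivative_det, charmatrix_map_derivative, mul_one]

/-- The Faddeev–LeVerrier matrices `Bₖ` of `M`, defined by `adj (X - M) = ∑ k, Bₖ X ^ k`. Comparing
their traces with their recursion in `k` yields Newton's identities. The coefficients of a matrix of
polynomials are read off through `matPolyEquiv`. -/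
noncomputable def faddeevLeVerrier (M : Matrix n n R) (k : ℕ) : Matrix n n R :=
  (matPolyEquiv M.charmatrix.adjugate).coeff k

theorem trace_faddeevLeVerrier (M : Matrix n n R) (k : ℕ) :
    (faddeevLeVerrier M k).trace = (k + 1) * M.charpoly.coeff (k + 1) := by
  have h := congrArg (coeff · k) (trace_adjugate_charmatrix M)
  simp only [trace, finsetSum_coeff, diag_apply, coeff_derivative] at h
  simp only [faddeevLeVerrier, trace, diag_apply, matPolyEquiv_coeff_apply, h, mul_comm]

theorem matPolyEquiv_adjugate_charmatrix_mul (M : Matrix n n R) :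
    matPolyEquiv M.charmatrix.adjugate * (X - C M) =
      M.charpoly.map (algebraMap R (Matrix n n R)) := by
  rw [← matPolyEquiv_charmatrix, ← map_mul, adjugate_mul, matPolyEquiv_smul_one, charpoly]

theorem faddeevLeVerrier_eq_add (M : Matrix n n R) (k : ℕ) :
    faddeevLeVerrier M k =
      faddeevLeVerrier M (k + 1) * M + M.charpoly.coeff (k + 1) • (1 : Matrix n n R) := by
  have h := congrArg (coeff · (k + 1)) (matPolyEquiv_adjugate_charmatrix_mul M)
  simp only [mul_sub, coeff_sub, coeff_mul_X, coeff_mul_C, coeff_map,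
    Algebra.algebraMap_eq_smul_one] at h
  exact sub_eq_iff_eq_add'.mp h

theorem faddeevLeVerrier_eq_add_sum (M : Matrix n n R) (k m : ℕ) :
    faddeevLeVerrier M k = faddeevLeVerrier M (k + m) * M ^ m +
      ∑ j ∈ Finset.range m, M.charpoly.coeff (k + 1 + j) • M ^ j := by
  induction m with
  | zero => simp
  | succ m ih =>
    rw [ih, faddeevLeVerrier_eq_add M (k + m), Finset.sum_range_succ, add_mul, smul_one_mul,
      mul_assoc, ← pow_succ', add_right_comm k 1 m, ← add_assoc k m 1]
    abel

theorem faddeevLeVerrier_eq_zero (M : Matrix n n R) {k : ℕ} (hk : Fintype.card n ≤ k) :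
    faddeevLeVerrier M k = 0 := by
  nontriviality Matrix n n R
  nontriviality R
  by_cases hN : matPolyEquiv M.charmatrix.adjugate = 0
  · rw [faddeevLeVerrier, hN, coeff_zero]
  refine coeff_eq_zero_of_natDegree_lt ?_
  have hdeg := (monic_X_sub_C M).natDegree_mul' hN
  rw [(monic_X_sub_C M).natDegree_mul_comm, matPolyEquiv_adjugate_charmatrix_mul,
    natDegree_X_sub_C, M.charpoly_monic.natDegree_map, charpoly_natDegree_eq_dim] at hdeg
  lia

theorem natCast_mul_charpoly_coeff (M : Matrix n n R) (k : ℕ) :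
    k * M.charpoly.coeff k =
      ∑ j ∈ Finset.range (Fintype.card n + 1), M.charpoly.coeff (k + j) * (M ^ j).trace := by
  nontriviality R
  cases k with
  | zero =>
    have hlt : M.charpoly.natDegree < Fintype.card n + 1 := by
      simp [charpoly_natDegree_eq_dim]
    have h := congrArg trace (aeval_self_charpoly M)
    rw [aeval_eq_sum_range' hlt] at h
    simpa [trace_sum] using h.symm
  | succ k =>
    have h := congrArg trace (faddeevLeVerrier_eq_add_sum M k (Fintype.card n + 1))
    rw [faddeevLeVerrier_eq_zero M (k := k + _) (by lia), zero_mul, zero_add,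
      trace_faddeevLeVerrier] at h
    simpa [trace_sum] using h

theorem charpoly_eq_X_pow_of_trace_pow_eq_zero [IsAddTorsionFree R] {M : Matrix n n R}
    (h : ∀ k, 1 ≤ k → k ≤ Fintype.card n → (M ^ k).trace = 0) :
    M.charpoly = X ^ Fintype.card n := by
  nontriviality R
  have hcoeff {k : ℕ} (hk : k ≠ Fintype.card n) : M.charpoly.coeff k = 0 := by
    have hnewton : k • M.charpoly.coeff k = Fintype.card n • M.charpoly.coeff k := by
      rw [nsmul_eq_mul, natCast_mul_charpoly_coeff, Finset.sum_range_succ',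
        Finset.sum_eq_zero fun j hj => by rw [h _ (by lia) (by grind), mul_zero]]
      simp [mul_comm]
    by_contra hne
    exact hk (Nat.cast_injective (smul_left_injective ℤ hne (by simpa using hnewton)))
  ext k
  rw [coeff_X_pow]
  split_ifs with hk
  · simpa [hk] using M.charpoly_monic.coeff_natDegree
  · exact hcoeff hk

theorem pow_card_eq_zero_of_trace_pow_eq_zero [IsAddTorsionFree R] {M : Matrix n n R}
    (h : ∀ k, 1 ≤ k → k ≤ Fintype.card n → (M ^ k).trace = 0) :
    M ^ Fintype.card n = 0 := by
  simpa [charpoly_eq_X_pow_of_trace_pow_eq_zero h] using aeval_self_charpoly M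

end Newton

section ExteriorAlgebra

open ExteriorAlgebra

theorem isAddTorsionFree_of_free (R M : Type*) [Semiring R] [AddCommMonoid M] [Module R M]
    [IsAddTorsionFree R] [Module.Free R M] : IsAddTorsionFree M :=
  Function.Injective.isAddTorsionFree
    (Module.Free.chooseBasis R M).repr.toLinearMap.toAddMonoidHom
    (Module.Free.chooseBasis R M).repr.injective

theorem trace_mul_eq_neg_of_anticommute {m n A : Type*} [Fintype m] [Fintype n]
    [NonUnitalNonAssocRing A] {P : Matrix m n A} {Q : Matrix n m A}
    (h : ∀ i j, P i j * Q j i = -(Q j i * P i j)) : (P * Q).trace = -(Q * P).trace := by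
  simp only [trace, diag_apply, mul_apply, h, Finset.sum_neg_distrib]
  rw [Finset.sum_comm]

variable {n R M : Type*} [CommRing R] [AddCommGroup M] [Module R M]

theorem isAddTorsionFree_exteriorAlgebra [IsAddTorsionFree R] [Module.Free R M] :
    IsAddTorsionFree (ExteriorAlgebra R M) := by
  classical
  let := linearOrderOfSTO (WellOrderingRel (α := Module.Free.ChooseBasisIndex R M))
  have : Module.Free R (ExteriorAlgebra R M) :=
    .of_basis (Module.Free.chooseBasis R M).ExteriorAlgebra
  exact isAddTorsionFree_of_free R _

theorem ι_mul_ι_eq_neg (x y : M) : ι R x * ι R y = -(ι R y * ι R x) :=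
  eq_neg_of_add_eq_zero_left (ι_add_mul_swap x y)

theorem ι_mul_ι_mem_center (x y : M) :
    ι R x * ι R y ∈ Subalgebra.center R (ExteriorAlgebra R M) := by
  rw [Subalgebra.mem_center_iff]
  intro a
  induction a using ExteriorAlgebra.induction with
  | algebraMap r => exact Algebra.commutes r _
  | ι z =>
    rw [← mul_assoc, ι_mul_ι_eq_neg z, neg_mul, mul_assoc, ι_mul_ι_eq_neg z, mul_neg, neg_neg,
      mul_assoc]
  | mul a b ha hb => exact Commute.mul_left ha hb
  | add a b ha hb => exact Commute.add_left ha hb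

variable [Fintype n] [DecidableEq n] (V : Matrix n n M)

theorem map_ι_pow_two_mul_mem_matrix_center (k : ℕ) :
    V.map (ι R) ^ (2 * k) ∈ (Subalgebra.center R (ExteriorAlgebra R M)).matrix := by
  have hsq : V.map (ι R) ^ 2 ∈ (Subalgebra.center R (ExteriorAlgebra R M)).matrix := fun i j => by
    rw [pow_two, mul_apply]
    exact sum_mem fun _ _ => ι_mul_ι_mem_center _ _
  rw [pow_mul]
  exact pow_mem hsq k

theorem ι_mul_map_ι_pow_two_mul_add_one_eq_neg (x : M) (k : ℕ) (i j : n) :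
    ι R x * (V.map (ι R) ^ (2 * k + 1)) i j = -((V.map (ι R) ^ (2 * k + 1)) i j * ι R x) := by
  simp only [pow_succ', mul_apply, map_apply, Finset.mul_sum, Finset.sum_mul,
    ← Finset.sum_neg_distrib]
  refine Finset.sum_congr rfl fun l _ => ?_
  have hmem : (V.map (ι R) ^ (2 * k)) l j ∈ Subalgebra.center R (ExteriorAlgebra R M) :=
    map_ι_pow_two_mul_mem_matrix_center V k l j
  rw [← mul_assoc, ι_mul_ι_eq_neg, neg_mul, mul_assoc, mul_assoc,
    Subalgebra.mem_center_iff.mp hmem (ι R x)]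

theorem trace_map_ι_pow_two_mul_eq_zero [IsAddTorsionFree (ExteriorAlgebra R M)] {k : ℕ}
    (hk : k ≠ 0) :
    (V.map (ι R) ^ (2 * k)).trace = 0 := by
  obtain ⟨k, rfl⟩ := Nat.exists_eq_succ_of_ne_zero hk
  rw [← self_eq_neg]
  calc (V.map (ι R) ^ (2 * (k + 1))).trace
      = (V.map (ι R) * V.map (ι R) ^ (2 * k + 1)).trace := by rw [← pow_succ', mul_add_one]
    _ = -(V.map (ι R) ^ (2 * k + 1) * V.map (ι R)).trace :=
        trace_mul_eq_neg_of_anticommute fun i j =>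
          ι_mul_map_ι_pow_two_mul_add_one_eq_neg V (V i j) k j i
    _ = -(V.map (ι R) ^ (2 * (k + 1))).trace := by rw [← pow_succ, mul_add_one]

theorem map_ι_pow_two_mul_card_eq_zero [IsAddTorsionFree (ExteriorAlgebra R M)] :
    V.map (ι R) ^ (2 * Fintype.card n) = 0 := by
  let Z := Subalgebra.center R (ExteriorAlgebra R M)
  have : IsAddTorsionFree Z :=
    Function.Injective.isAddTorsionFree Z.val.toAddMonoidHom Subtype.val_injective
  have hsq := map_ι_pow_two_mul_mem_matrix_center (R := R) V 1
  obtain ⟨B, hB⟩ : ∃ B : Matrix n n Z, Z.val.mapMatrix B = V.map (ι R) ^ 2 :=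
    ⟨of fun i j => ⟨_, hsq i j⟩, rfl⟩
  have htrace (k : ℕ) (hk : 1 ≤ k) : (B ^ k).trace = 0 := by
    apply Subtype.val_injective
    change Z.val (B ^ k).trace = 0
    rw [AddMonoidHom.map_trace, ← AlgHom.mapMatrix_apply, map_pow, hB, ← pow_mul,
      trace_map_ι_pow_two_mul_eq_zero V (by lia)]
  rw [pow_mul, ← hB, ← map_pow, pow_card_eq_zero_of_trace_pow_eq_zero fun k hk _ => htrace k hk,
    map_zero]

end ExteriorAlgebra

section StandardPolynomial

open TensorProduct ExteriorAlgebra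

theorem sum_eq_sum_perm_of_not_injective {α N : Type*} [Fintype α] [DecidableEq α]
    [AddCommMonoid N] (g : (α → α) → N) (h : ∀ f, ¬Function.Injective f → g f = 0) :
    ∑ f, g f = ∑ σ : Equiv.Perm α, g σ := by
  refine (Finset.sum_of_injOn (fun σ : Equiv.Perm α => ⇑σ) DFunLike.coe_injective.injOn (by simp)
    (fun f _ hf => h f fun hinj => ?_) (by simp)).symm
  exact hf ⟨.ofBijective f hinj.bijective_of_finite, by simp, rfl⟩

theorem sum_pow_eq_sum_prod_ofFn {κ A : Type*} [Fintype κ] [Semiring A] (a : κ → A) (m : ℕ) :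
    (∑ i, a i) ^ m = ∑ f : Fin m → κ, (List.ofFn (a ∘ f)).prod := by
  classical
  simpa [Function.comp_def] using (MultilinearMap.mkPiAlgebraFin ℕ m A).map_sum fun _ => a

theorem prod_ofFn_tmul {R A B : Type*} [CommSemiring R] [Semiring A] [Algebra R A] [Semiring B]
    [Algebra R B] {m : ℕ} (a : Fin m → A) (b : Fin m → B) :
    (List.ofFn fun t => a t ⊗ₜ[R] b t).prod = (List.ofFn a).prod ⊗ₜ (List.ofFn b).prod := by
  induction m with
  | zero => simp [Algebra.TensorProduct.one_def]
  | succ m ih => simp [List.ofFn_succ, ih]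

variable {R A : Type*} [CommRing R] [Ring A] [Algebra R A] {m : ℕ}

variable (R A m) in
/-- The standard polynomial `∑ σ, sgn σ • X_{σ 1} ⋯ X_{σ m}` of degree `m`, encoded as an
alternating map in `X` so that its vanishing can be checked on a basis. -/
noncomputable def standardPolynomial : A [⋀^Fin m]→ₗ[R] A :=
  (MultilinearMap.mkPiAlgebraFin R m A).alternatization

theorem standardPolynomial_apply (X : Fin m → A) :
    standardPolynomial R A m X =
      ∑ σ : Equiv.Perm (Fin m), (Equiv.Perm.sign σ : ℤ) • (List.ofFn fun t => X (σ t)).prod := by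
  simp [standardPolynomial, MultilinearMap.alternatization_apply, Units.smul_def]

theorem map_standardPolynomial {S B : Type*} [CommRing S] [Ring B] [Algebra S B] (f : A →+* B)
    (X : Fin m → A) :
    f (standardPolynomial R A m X) = standardPolynomial S B m (f ∘ X) := by
  simp [standardPolynomial_apply, map_list_prod, List.map_ofFn, Function.comp_def]

variable {M : Type*} [AddCommGroup M] [Module R M]

theorem sum_ι_tmul_pow (v : Fin m → M) (X : Fin m → A) :
    (∑ i, ι R (v i) ⊗ₜ[R] X i) ^ m = ιMulti R m v ⊗ₜ standardPolynomial R A m X := by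
  calc (∑ i, ι R (v i) ⊗ₜ[R] X i) ^ m
      = ∑ f : Fin m → Fin m, ιMulti R m (v ∘ f) ⊗ₜ (List.ofFn (X ∘ f)).prod := by
        simp only [sum_pow_eq_sum_prod_ofFn, Function.comp_def, prod_ofFn_tmul, ιMulti_apply]
    _ = ∑ σ : Equiv.Perm (Fin m), ιMulti R m (v ∘ σ) ⊗ₜ (List.ofFn (X ∘ σ)).prod :=
        sum_eq_sum_perm_of_not_injective
          (fun f => ιMulti R m (v ∘ f) ⊗ₜ (List.ofFn (X ∘ f)).prod) fun f hf => by
          rw [(ιMulti R m).map_eq_zero_of_not_injective _ (mt .of_comp hf), zero_tmul]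
    _ = ιMulti R m v ⊗ₜ standardPolynomial R A m X := by
        rw [standardPolynomial_apply, tmul_sum]
        refine Finset.sum_congr rfl fun σ _ => ?_
        rw [AlternatingMap.map_perm, Units.smul_def, smul_tmul, Function.comp_def]

theorem exists_apply_ιMulti_basis_eq_one (b : Module.Basis (Fin m) R M) :
    ∃ φ : ExteriorAlgebra R M →ₗ[R] R, φ (ιMulti R m b) = 1 := by
  refine ⟨liftAlternating (Pi.single m b.det), ?_⟩
  rw [liftAlternating_apply_ιMulti, Pi.single_eq_same, b.det_self]

theorem eq_zero_of_ιMulti_basis_tmul_eq_zero (b : Module.Basis (Fin m) R M) {a : A}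
    (h : ιMulti R m b ⊗ₜ[R] a = 0) : a = 0 := by
  obtain ⟨φ, hφ⟩ := exists_apply_ιMulti_basis_eq_one b
  simpa [hφ] using congrArg (TensorProduct.lid R A ∘ φ.rTensor A) h

variable {n : Type*} [Fintype n] [DecidableEq n]

theorem standardPolynomial_matrix_eq_zero_of_isAddTorsionFree [IsAddTorsionFree R]
    (hm : 2 * Fintype.card n ≤ m) : standardPolynomial R (Matrix n n R) m = 0 := by
  have := isAddTorsionFree_exteriorAlgebra (R := R) (M := Fin m → R)
  ext1 X
  let b := Pi.basisFun R (Fin m)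
  let V : Matrix n n (Fin m → R) := of fun i j t => X t i j
  have hV : matrixEquivTensor n R (ExteriorAlgebra R (Fin m → R)) (V.map (ι R)) =
      ∑ t, ι R (b t) ⊗ₜ X t := by
    rw [← AlgEquiv.eq_symm_apply, map_sum]
    ext i j
    rw [map_apply, pi_eq_sum_univ' (V i j), map_sum, Matrix.sum_apply]
    simp [b, V, ← Algebra.commutes, ← Algebra.smul_def]
  apply eq_zero_of_ιMulti_basis_tmul_eq_zero b
  rw [← sum_ι_tmul_pow, ← hV, ← map_pow,
    pow_eq_zero_of_le hm (map_ι_pow_two_mul_card_eq_zero V), map_zero]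

theorem standardPolynomial_matrix_eq_zero (hm : 2 * Fintype.card n ≤ m) :
    standardPolynomial R (Matrix n n R) m = 0 := by
  refine (Matrix.stdBasis R n n).ext_alternating fun v _ => ?_
  have hv : (fun t => Matrix.stdBasis R n n (v t)) =
      (Int.castRingHom R).mapMatrix ∘ fun t => single (v t).1 (v t).2 1 := by
    funext t
    rw [Matrix.stdBasis_eq_single, Function.comp_apply, RingHom.mapMatrix_apply, map_single,
      map_one]
  rw [hv, ← map_standardPolynomial (R := ℤ),
    standardPolynomial_matrix_eq_zero_of_isAddTorsionFree hm]
  simp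

end StandardPolynomial

theorem amitsur_levitzki_general {n R : Type*} [Fintype n] [DecidableEq n] [CommRing R] {m : ℕ}
    (hm : 2 * Fintype.card n ≤ m) (X : Fin m → Matrix n n R) :
    ∑ σ : Equiv.Perm (Fin m),
      (Equiv.Perm.sign σ : ℤ) • (List.ofFn fun t => X (σ t)).prod = 0 := by
  rw [← standardPolynomial_apply (R := R), standardPolynomial_matrix_eq_zero hm,
    AlternatingMap.zero_apply]

theorem amitsur_levitzki (n : ℕ) (hn : 0 < n)
    (X : Fin (2 * n) → Matrix (Fin n) (Fin n) ℂ) :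
    ∑ σ : Equiv.Perm (Fin (2 * n)),
      (Equiv.Perm.sign σ : ℤ) • (List.ofFn fun t => X (σ t)).prod = 0 :=
  amitsur_levitzki_general (by rw [Fintype.card_fin]) X
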